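/- Let a ∈ ℝ, let I_f be an interval with least element a, nonempty interior, and I_f ⊂ [a,∞), let Ω ⊂ ℝ^m be a nonempty open set, let α = (α₁,…,α_m) ∈ (0,1]^m, let q_a ∈ Ω, and let f : Ω × I_f → ℝ^m be a Carathéodory function that is bounded on compacts and locally Lipschitz continuous in its first variable. If (q,I) and (q',I') are two local solutions of the Caputo Cauchy problem ( _cD^{α_i}_{a+}[q_i] = f_i(q(·),·) a.e., q(a) = q_a ) with I ⊂ I', then q'(t) = q(t) for every t ∈ I; in particular any two local solutions agree on the intersection of their intervals. -/

import Mathlib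

open MeasureTheory Set

/-- Left Riemann–Liouville fractional integral of order `α` with base point `a`
(for `α = 0` it is the identity). -/
noncomputable def rlInt (a α : ℝ) (q : ℝ → ℝ) (t : ℝ) : ℝ :=
  if α = 0 then q t else (1 / Real.Gamma α) * ∫ τ in a..t, (t - τ) ^ (α - 1) * q τ

/-- `I` is an interval with least element `a`, nonempty interior, and `I ⊆ [a,∞)`. -/
def IsIntervalFrom (a : ℝ) (I : Set ℝ) : Prop :=
  a ∈ I ∧ I ⊆ Set.Ici a ∧ (interior I).Nonempty ∧ I.OrdConnected

/-- `(q, I)` is a local solution of the Caputo Cauchy problem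
`_cD^{α_i}_{a+}[q_i] = F_i(q(·),·)` a.e., `q(a) = qa`, on the domain `Ω`:
`I ⊆ If` is an interval with least element `a` and nonempty interior, `q` is continuous
on `I` with values in `Ω` and `q(a) = qa`, and for each `i` the function
`I^{1-α_i}_{a+}[q_i - (qa)_i]` agrees a.e. on `I` with a locally absolutely continuous
function `t ↦ c + ∫_a^t h` whose derivative `h` (the Caputo fractional derivative of
`q_i`) equals `F_i(q(t), t)` for almost every `t ∈ I`. -/
def IsCaputoLocalSol (a : ℝ) (If : Set ℝ) {m : ℕ}
    (Ω : Set (EuclideanSpace ℝ (Fin m))) (α : Fin m → ℝ)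
    (qa : EuclideanSpace ℝ (Fin m))
    (F : EuclideanSpace ℝ (Fin m) → ℝ → EuclideanSpace ℝ (Fin m))
    (q : ℝ → EuclideanSpace ℝ (Fin m)) (I : Set ℝ) : Prop :=
  IsIntervalFrom a I ∧ I ⊆ If ∧ ContinuousOn q I ∧ (∀ t ∈ I, q t ∈ Ω) ∧ q a = qa ∧
  ∀ i, ∃ c : ℝ, ∃ h : ℝ → ℝ,
    (∀ b ∈ I, MeasureTheory.IntegrableOn h (Set.Icc a b)) ∧
    (∀ᵐ t ∂(MeasureTheory.volume.restrict I),
      rlInt a (1 - α i) (fun τ => q τ i - qa i) t = c + ∫ τ in a..t, h τ) ∧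
    (∀ᵐ t ∂(MeasureTheory.volume.restrict I), h t = F (q t) t i)

/-- `(q, I)` is a maximal local solution of the Caputo Cauchy problem:
every extension `(q', I')` of it satisfies `I' = I`. -/
def IsMaximalSol (a : ℝ) (If : Set ℝ) {m : ℕ}
    (Ω : Set (EuclideanSpace ℝ (Fin m))) (α : Fin m → ℝ)
    (qa : EuclideanSpace ℝ (Fin m))
    (F : EuclideanSpace ℝ (Fin m) → ℝ → EuclideanSpace ℝ (Fin m))
    (q : ℝ → EuclideanSpace ℝ (Fin m)) (I : Set ℝ) : Prop :=
  IsCaputoLocalSol a If Ω α qa F q I ∧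
  ∀ (q' : ℝ → EuclideanSpace ℝ (Fin m)) (I' : Set ℝ),
    IsCaputoLocalSol a If Ω α qa F q' I' → I ⊆ I' → Set.EqOn q' q I → I' = I

open Filter TopologicalSpace
open scoped Topology NNReal

/-!
The semigroup law `I^α I^β = I^{α+β}` of the fractional integrals turns the Caputo equation into
a Volterra equation: the difference `u` of two solutions satisfies `u = I^α h` almost everywhere,
where `h` is the difference of the right-hand sides. If the solutions agree on `[a, x]`, then `h`
vanishes there, and on `[x, d]` the Lipschitz bound on `F` gives `|u_i| ≤ C (d - x)^{α_i} sup ‖u‖`.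
For `d` close to `x` this is a contraction, so the solutions agree slightly beyond `x`, and
continuous induction on `x` finishes the proof.
-/

section IntervalLemmas

variable {a b : ℝ}

theorem ae_eq_of_forall_intervalIntegral_eq {E : Type*} [NormedAddCommGroup E] [NormedSpace ℝ E]
    [CompleteSpace E] {f g : ℝ → E} (hab : a ≤ b)
    (hf : IntervalIntegrable f volume a b) (hg : IntervalIntegrable g volume a b)
    (h : ∀ t ∈ Icc a b, ∫ s in a..t, f s = ∫ s in a..t, g s) :
    f =ᵐ[volume.restrict (Ioc a b)] g := by
  rw [EventuallyEq, ← restrict_Ioo_eq_restrict_Ioc, ae_restrict_iff' measurableSet_Ioo]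
  filter_upwards [hf.ae_hasDerivAt_integral, hg.ae_hasDerivAt_integral] with t hft hgt ht
  rw [uIcc_of_le hab] at hft hgt
  have htab : t ∈ Icc a b := Ioo_subset_Icc_self ht
  have ha : a ∈ Icc a b := left_mem_Icc.2 hab
  have heq : (fun t => ∫ s in a..t, f s) =ᶠ[𝓝 t] fun t => ∫ s in a..t, g s :=
    eventually_of_mem (Icc_mem_nhds ht.1 ht.2) h
  exact (hft htab a ha).unique ((hgt htab a ha).congr_of_eventuallyEq heq)

theorem frequently_nhdsGT_of_ae {p : ℝ → Prop} (hab : a < b)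
    (h : ∀ᵐ t ∂volume.restrict (Ioc a b), p t) : ∃ᶠ t in 𝓝[>] a, p t := by
  have hdense : Dense {t | t ∈ Ioc a b → p t} :=
    Measure.dense_of_ae ((ae_restrict_iff' measurableSet_Ioc).1 h)
  refine frequently_iff.2 fun {U} hU => ?_
  obtain ⟨c, hac, hcU⟩ := mem_nhdsGT_iff_exists_Ioo_subset.1 (inter_mem hU (Ioc_mem_nhdsGT hab))
  obtain ⟨t, htac, ht⟩ := hdense.exists_mem_open isOpen_Ioo (nonempty_Ioo.2 hac)
  exact ⟨t, (hcU ht).1, htac (hcU ht).2⟩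

theorem le_of_ae_le_of_continuousOn_Icc {β : Type*} [LinearOrder β] [TopologicalSpace β]
    [OrderClosedTopology β] {f g : ℝ → β} (hab : a < b)
    (hf : ContinuousOn f (Icc a b)) (hg : ContinuousOn g (Icc a b))
    (h : ∀ᵐ t ∂volume.restrict (Ioc a b), f t ≤ g t) : ∀ t ∈ Icc a b, f t ≤ g t := by
  have hmax : (fun t => max (f t) (g t)) =ᵐ[volume.restrict (Icc a b)] g := by
    rw [EventuallyEq, ← restrict_Ioc_eq_restrict_Icc]
    exact h.mono fun t => max_eq_right
  exact fun t ht =>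
    max_eq_right_iff.1 (Measure.eqOn_Icc_of_ae_eq volume hab.ne hmax (hf.sup hg) hg ht)

end IntervalLemmas

section Triangle

variable {a b : ℝ}

theorem indicator_triangle_left {M : Type*} [Zero M] (f : ℝ → ℝ → M) (t : ℝ) :
    (fun s => {p : ℝ × ℝ | p.2 < p.1}.indicator (Function.uncurry f) (t, s)) =
      (Iio t).indicator (f t) := by
  ext s; simp [indicator]

theorem indicator_triangle_right {M : Type*} [Zero M] (f : ℝ → ℝ → M) (s : ℝ) :
    (fun t => {p : ℝ × ℝ | p.2 < p.1}.indicator (Function.uncurry f) (t, s)) =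
      (Ioi s).indicator fun t => f t s := by
  ext t; simp [indicator]

theorem restrict_Ioc_restrict_Ioi {s : ℝ} (hs : a ≤ s) :
    (volume.restrict (Ioc a b)).restrict (Ioi s) = volume.restrict (Ioc s b) := by
  rw [Measure.restrict_restrict measurableSet_Ioi, inter_comm, Ioc_inter_Ioi, max_eq_right hs]

theorem restrict_Ioc_restrict_Iio {t : ℝ} (ht : t ≤ b) :
    (volume.restrict (Ioc a b)).restrict (Iio t) = volume.restrict (Ioc a t) := by
  rw [Measure.restrict_restrict measurableSet_Iio, ← restrict_Ioo_eq_restrict_Ioc]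
  congr 1; ext s; simp only [mem_inter_iff, mem_Iio, mem_Ioc, mem_Ioo]; grind

theorem measurableSet_triangle : MeasurableSet {p : ℝ × ℝ | p.2 < p.1} :=
  measurableSet_lt measurable_snd measurable_fst

variable {E : Type*} [NormedAddCommGroup E] [NormedSpace ℝ E]

theorem integral_indicator_triangle_left {f : ℝ → ℝ → E} {t : ℝ} (ht : t ∈ Ioc a b) :
    ∫ s in Ioc a b, {p : ℝ × ℝ | p.2 < p.1}.indicator (Function.uncurry f) (t, s) =
      ∫ s in a..t, f t s := by
  rw [indicator_triangle_left, integral_indicator measurableSet_Iio,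
    restrict_Ioc_restrict_Iio ht.2, intervalIntegral.integral_of_le ht.1.le]

theorem integral_indicator_triangle_right {f : ℝ → ℝ → E} {s : ℝ} (hs : s ∈ Ioc a b) :
    ∫ t in Ioc a b, {p : ℝ × ℝ | p.2 < p.1}.indicator (Function.uncurry f) (t, s) =
      ∫ t in s..b, f t s := by
  rw [indicator_triangle_right, integral_indicator measurableSet_Ioi,
    restrict_Ioc_restrict_Ioi hs.1.le, intervalIntegral.integral_of_le hs.2]

theorem intervalIntegrable_integral_of_integrableOn_triangle {f : ℝ → ℝ → E} (hab : a ≤ b)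
    (hf : IntegrableOn (Function.uncurry f) {p | p.2 < p.1}
      ((volume.restrict (Ioc a b)).prod (volume.restrict (Ioc a b)))) :
    IntervalIntegrable (fun t => ∫ s in a..t, f t s) volume a b := by
  rw [intervalIntegrable_iff_integrableOn_Ioc_of_le hab]
  exact IntegrableOn.congr_fun
    ((integrable_indicator_iff measurableSet_triangle).2 hf).integral_prod_left
    (fun t ht => integral_indicator_triangle_left ht) measurableSet_Ioc

theorem integral_integral_swap_triangle {f : ℝ → ℝ → E} (hab : a ≤ b)
    (hf : IntegrableOn (Function.uncurry f) {p | p.2 < p.1}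
      ((volume.restrict (Ioc a b)).prod (volume.restrict (Ioc a b)))) :
    ∫ t in a..b, ∫ s in a..t, f t s = ∫ s in a..b, ∫ t in s..b, f t s := by
  simp only [intervalIntegral.integral_of_le hab]
  rw [← setIntegral_congr_fun measurableSet_Ioc fun t ht => integral_indicator_triangle_left ht,
    ← setIntegral_congr_fun measurableSet_Ioc fun s hs => integral_indicator_triangle_right hs]
  exact integral_integral_swap ((integrable_indicator_iff measurableSet_triangle).2 hf)

theorem integrableOn_triangle_mul {k : ℝ → ℝ → ℝ} {g : ℝ → ℝ} {C : ℝ} (hab : a ≤ b)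
    (hk : Measurable (Function.uncurry k)) (hk0 : ∀ s t, s < t → t ≤ b → 0 ≤ k t s)
    (hki : ∀ s ∈ Ioo a b, IntervalIntegrable (fun t => k t s) volume s b)
    (hkC : ∀ s ∈ Ioo a b, ∫ t in s..b, k t s ≤ C) (hg : IntervalIntegrable g volume a b) :
    IntegrableOn (Function.uncurry fun t s => k t s * g s) {p | p.2 < p.1}
      ((volume.restrict (Ioc a b)).prod (volume.restrict (Ioc a b))) := by
  rw [intervalIntegrable_iff_integrableOn_Ioc_of_le hab] at hg
  have hmeas : AEStronglyMeasurable
      ({p | p.2 < p.1}.indicator (Function.uncurry fun t s => k t s * g s))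
      ((volume.restrict (Ioc a b)).prod (volume.restrict (Ioc a b))) :=
    (hk.aestronglyMeasurable.mul hg.aestronglyMeasurable.comp_snd).indicator measurableSet_triangle
  have hIoo : ∀ᵐ s ∂volume.restrict (Ioc a b), s ∈ Ioo a b := by
    rw [← restrict_Ioo_eq_restrict_Ioc]
    exact ae_restrict_mem measurableSet_Ioo
  rw [← integrable_indicator_iff measurableSet_triangle, integrable_prod_iff' hmeas]
  refine ⟨hIoo.mono fun s hs => ?_, (hg.norm.const_mul C).mono'
    hmeas.norm.prod_swap.integral_prod_right' (hIoo.mono fun s hs => ?_)⟩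
  · rw [indicator_triangle_right, integrable_indicator_iff measurableSet_Ioi, IntegrableOn,
      restrict_Ioc_restrict_Ioi hs.1.le]
    exact ((intervalIntegrable_iff_integrableOn_Ioc_of_le hs.2.le).1 (hki s hs)).mul_const (g s)
  · have hintegral : ∫ t in Ioc a b, ‖{p : ℝ × ℝ | p.2 < p.1}.indicator
        (Function.uncurry fun t s => k t s * g s) (t, s)‖ = (∫ t in s..b, k t s) * ‖g s‖ := by
      simp only [norm_indicator_eq_indicator_norm]
      refine (integral_indicator_triangle_right (f := fun t s => ‖k t s * g s‖)
        ⟨hs.1, hs.2.le⟩).trans ?_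
      rw [← intervalIntegral.integral_mul_const, intervalIntegral.integral_of_le hs.2.le,
        intervalIntegral.integral_of_le hs.2.le]
      refine setIntegral_congr_fun measurableSet_Ioc fun t ht => ?_
      simp only [norm_mul, Real.norm_of_nonneg (hk0 s t ht.1 ht.2)]
    have hk_nonneg : 0 ≤ ∫ t in s..b, k t s := by
      rw [intervalIntegral.integral_of_le hs.2.le]
      exact setIntegral_nonneg measurableSet_Ioc fun t ht => hk0 s t ht.1 ht.2
    rw [hintegral, Real.norm_of_nonneg (mul_nonneg hk_nonneg (norm_nonneg _))]
    exact mul_le_mul_of_nonneg_right (hkC s hs) (norm_nonneg _)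

end Triangle

section BetaKernel

variable {a b α β : ℝ}

theorem integral_rpow_sub_mul_rpow_sub (hα : 0 < α) (hβ : 0 < β) (hab : a < b) :
    ∫ t in a..b, (b - t) ^ (α - 1) * (t - a) ^ (β - 1) =
      Real.Gamma α * Real.Gamma β / Real.Gamma (α + β) * (b - a) ^ (α + β - 1) := by
  have hshift : ∫ t in a..b, (b - t) ^ (α - 1) * (t - a) ^ (β - 1) =
      ∫ x in (0 : ℝ)..(b - a), x ^ (β - 1) * (b - a - x) ^ (α - 1) := by
    rw [← sub_self a, ← intervalIntegral.integral_comp_sub_right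
      (fun x => x ^ (β - 1) * (b - a - x) ^ (α - 1)) a]
    simp only [sub_sub_sub_cancel_right, mul_comm]
  have hcast : ((∫ x in (0 : ℝ)..(b - a), x ^ (β - 1) * (b - a - x) ^ (α - 1) : ℝ) : ℂ) =
      ∫ x in (0 : ℝ)..(b - a),
        (x : ℂ) ^ ((β : ℂ) - 1) * (((b - a : ℝ) : ℂ) - x) ^ ((α : ℂ) - 1) := by
    rw [← intervalIntegral.integral_ofReal]
    refine intervalIntegral.integral_congr fun x hx => ?_
    rw [uIcc_of_le (sub_nonneg.2 hab.le)] at hx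
    simp only [Complex.ofReal_mul, Complex.ofReal_cpow hx.1, Complex.ofReal_sub,
      Complex.ofReal_cpow (sub_nonneg.2 hx.2), Complex.ofReal_one]
  rw [hshift, ← Complex.ofReal_inj, hcast, Complex.betaIntegral_scaled _ _ (sub_pos.2 hab),
    Complex.betaIntegral_eq_Gamma_mul_div _ _ (by simpa) (by simpa)]
  simp only [Complex.ofReal_mul, Complex.ofReal_div, ← Complex.Gamma_ofReal,
    Complex.ofReal_cpow (sub_nonneg.2 hab.le), Complex.ofReal_add, Complex.ofReal_sub,
    Complex.ofReal_one]
  rw [add_comm (β : ℂ)]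
  ring

theorem intervalIntegrable_rpow_sub_mul_rpow_sub (hα : 0 < α) (hβ : 0 < β) (hab : a < b) :
    IntervalIntegrable (fun t => (b - t) ^ (α - 1) * (t - a) ^ (β - 1)) volume a b := by
  have := Real.Gamma_pos_of_pos hα
  have := Real.Gamma_pos_of_pos hβ
  have := Real.Gamma_pos_of_pos (add_pos hα hβ)
  have := Real.rpow_pos_of_pos (sub_pos.2 hab) (α + β - 1)
  -- A non-integrable function would have integral `0`, unlike this one.
  by_contra h
  have hzero := intervalIntegral.integral_undef h
  rw [integral_rpow_sub_mul_rpow_sub hα hβ hab] at hzero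
  exact (by positivity : Real.Gamma α * Real.Gamma β / Real.Gamma (α + β) *
    (b - a) ^ (α + β - 1) ≠ 0) hzero

theorem intervalIntegrable_rpow_sub (hα : 0 < α) (a b : ℝ) :
    IntervalIntegrable (fun t => (b - t) ^ (α - 1)) volume a b := by
  have h := (intervalIntegral.intervalIntegrable_rpow' (a := b - a) (b := 0)
    (by linarith : -1 < α - 1)).comp_sub_left b
  simpa using h

theorem integral_rpow_sub (hα : 0 < α) (a b : ℝ) :
    ∫ t in a..b, (b - t) ^ (α - 1) = (b - a) ^ α / α := by
  rw [intervalIntegral.integral_comp_sub_left (fun x => x ^ (α - 1)) b, sub_self,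
    integral_rpow (Or.inl (by linarith)), sub_add_cancel, Real.zero_rpow hα.ne', sub_zero]

end BetaKernel

section RiemannLiouville

variable {a b t α β : ℝ} {f g : ℝ → ℝ}

theorem rlInt_zero (a : ℝ) (g : ℝ → ℝ) : rlInt a 0 g = g := by
  ext t; exact if_pos rfl

theorem rlInt_of_ne_zero (hα : α ≠ 0) (a : ℝ) (g : ℝ → ℝ) (t : ℝ) :
    rlInt a α g t = 1 / Real.Gamma α * ∫ τ in a..t, (t - τ) ^ (α - 1) * g τ :=
  if_neg hα

theorem rlInt_one (a : ℝ) (g : ℝ → ℝ) (t : ℝ) : rlInt a 1 g t = ∫ τ in a..t, g τ := by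
  simp only [rlInt_of_ne_zero one_ne_zero, Real.Gamma_one, div_one, sub_self, Real.rpow_zero,
    one_mul]

theorem rlInt_congr_ae (hα : α ≠ 0) (hat : a ≤ t) (h : f =ᵐ[volume.restrict (Ioc a t)] g) :
    rlInt a α f t = rlInt a α g t := by
  simp only [rlInt_of_ne_zero hα, intervalIntegral.integral_of_le hat]
  congr 1
  refine integral_congr_ae ?_
  filter_upwards [h] with τ hτ
  rw [hτ]

theorem integrableOn_triangle_rpow_mul (hα : 0 < α) (hβ : 0 < β) (hαβ : 1 ≤ α + β) (hab : a ≤ b)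
    (hg : IntervalIntegrable g volume a b) :
    IntegrableOn (Function.uncurry fun t s => (b - t) ^ (α - 1) * (t - s) ^ (β - 1) * g s)
      {p | p.2 < p.1} ((volume.restrict (Ioc a b)).prod (volume.restrict (Ioc a b))) := by
  refine integrableOn_triangle_mul hab (by fun_prop) (fun s t hst htb => ?_)
    (fun s hs => intervalIntegrable_rpow_sub_mul_rpow_sub hα hβ hs.2) (fun s hs => ?_) hg
    (C := Real.Gamma α * Real.Gamma β / Real.Gamma (α + β) * (b - a) ^ (α + β - 1))
  · exact mul_nonneg (Real.rpow_nonneg (sub_nonneg.2 htb) _)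
      (Real.rpow_nonneg (sub_nonneg.2 hst.le) _)
  · rw [integral_rpow_sub_mul_rpow_sub hα hβ hs.2]
    have := Real.Gamma_pos_of_pos hα
    have := Real.Gamma_pos_of_pos hβ
    have := Real.Gamma_pos_of_pos (add_pos hα hβ)
    gcongr
    exacts [sub_nonneg.2 hs.2.le, hs.1.le]

theorem intervalIntegrable_rlInt (hβ : 0 ≤ β) (hab : a ≤ b)
    (hg : IntervalIntegrable g volume a b) : IntervalIntegrable (rlInt a β g) volume a b := by
  obtain rfl | hβ := hβ.eq_or_lt
  · rwa [rlInt_zero]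
  have h := intervalIntegrable_integral_of_integrableOn_triangle hab
    (integrableOn_triangle_rpow_mul one_pos hβ (by linarith) hab hg)
  simp only [sub_self, Real.rpow_zero, one_mul] at h
  rw [funext (rlInt_of_ne_zero hβ.ne' a g)]
  exact h.const_mul _

theorem integral_rpow_mul_integral_rpow_mul (hα : 0 < α) (hβ : 0 < β) (hαβ : 1 ≤ α + β)
    (hab : a ≤ b) (hg : IntervalIntegrable g volume a b) :
    ∫ t in a..b, (b - t) ^ (α - 1) * ∫ s in a..t, (t - s) ^ (β - 1) * g s =
      Real.Gamma α * Real.Gamma β / Real.Gamma (α + β) *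
        ∫ s in a..b, (b - s) ^ (α + β - 1) * g s := by
  have hswap := integral_integral_swap_triangle hab
    (integrableOn_triangle_rpow_mul hα hβ hαβ hab hg)
  simp only [mul_assoc, intervalIntegral.integral_const_mul] at hswap
  rw [hswap, ← intervalIntegral.integral_const_mul]
  refine intervalIntegral.integral_congr_Ioo_of_le hab fun s hs => ?_
  simp only [← mul_assoc, intervalIntegral.integral_mul_const,
    integral_rpow_sub_mul_rpow_sub hα hβ hs.2]

theorem rlInt_rlInt (hα : 0 ≤ α) (hβ : 0 ≤ β) (hαβ : 1 ≤ α + β) (hab : a ≤ b)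
    (hg : IntervalIntegrable g volume a b) :
    rlInt a α (rlInt a β g) b = rlInt a (α + β) g b := by
  obtain rfl | hα := hα.eq_or_lt
  · rw [rlInt_zero, zero_add]
  obtain rfl | hβ := hβ.eq_or_lt
  · rw [rlInt_zero, add_zero]
  have hΓα := (Real.Gamma_pos_of_pos hα).ne'
  have hΓβ := (Real.Gamma_pos_of_pos hβ).ne'
  simp only [rlInt_of_ne_zero hα.ne', rlInt_of_ne_zero hβ.ne', mul_left_comm _ (1 / Real.Gamma β),
    intervalIntegral.integral_const_mul, rlInt_of_ne_zero (add_pos hα hβ).ne',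
    integral_rpow_mul_integral_rpow_mul hα hβ hαβ hab hg]
  field_simp

theorem intervalIntegrable_rpow_mul (hα : 0 < α) (hat : a ≤ t) (hg : ContinuousOn g (Icc a t)) :
    IntervalIntegrable (fun τ => (t - τ) ^ (α - 1) * g τ) volume a t :=
  (intervalIntegrable_rpow_sub hα a t).mul_continuousOn (by rwa [uIcc_of_le hat])

theorem rlInt_sub (hα : 0 ≤ α) (hat : a ≤ t) (hf : ContinuousOn f (Icc a t))
    (hg : ContinuousOn g (Icc a t)) :
    rlInt a α (fun τ => f τ - g τ) t = rlInt a α f t - rlInt a α g t := by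
  obtain rfl | hα := hα.eq_or_lt
  · simp only [rlInt_zero]
  simp only [rlInt_of_ne_zero hα.ne', mul_sub]
  rw [intervalIntegral.integral_sub (intervalIntegrable_rpow_mul hα hat hf)
    (intervalIntegrable_rpow_mul hα hat hg), mul_sub]

theorem abs_rlInt_le {C : ℝ} (hα : 0 < α) (hat : a ≤ t)
    (hg : ∀ᵐ τ ∂volume.restrict (Ioc a t), |g τ| ≤ C) :
    |rlInt a α g t| ≤ C * ((t - a) ^ α / Real.Gamma (α + 1)) := by
  have hbound : |∫ τ in a..t, (t - τ) ^ (α - 1) * g τ| ≤ ∫ τ in a..t, (t - τ) ^ (α - 1) * C := by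
    refine intervalIntegral.norm_integral_le_of_norm_le (E := ℝ) hat ?_
      ((intervalIntegrable_rpow_sub hα a t).mul_const C)
    filter_upwards [(ae_restrict_iff' measurableSet_Ioc).1 hg] with τ hτ hmem
    have hker : 0 ≤ (t - τ) ^ (α - 1) := Real.rpow_nonneg (sub_nonneg.2 hmem.2) _
    rw [norm_mul, Real.norm_of_nonneg hker]
    exact mul_le_mul_of_nonneg_left (hτ hmem) hker
  rw [intervalIntegral.integral_mul_const, integral_rpow_sub hα] at hbound
  have hΓ := Real.Gamma_pos_of_pos hα
  rw [rlInt_of_ne_zero hα.ne', abs_mul, abs_of_pos (one_div_pos.2 hΓ), Real.Gamma_add_one hα.ne']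
  calc 1 / Real.Gamma α * |∫ τ in a..t, (t - τ) ^ (α - 1) * g τ|
      ≤ 1 / Real.Gamma α * ((t - a) ^ α / α * C) := by gcongr
    _ = C * ((t - a) ^ α / (α * Real.Gamma α)) := by field_simp

theorem rlInt_eq_rlInt_of_ae_eq_zero {x : ℝ} (hα : α ≠ 0) (hax : a ≤ x) (hxt : x ≤ t)
    (hg : ∀ᵐ τ ∂volume.restrict (Ioc a x), g τ = 0) : rlInt a α g t = rlInt x α g t := by
  simp only [rlInt_of_ne_zero hα, intervalIntegral.integral_of_le (hax.trans hxt),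
    intervalIntegral.integral_of_le hxt]
  congr 1
  refine setIntegral_eq_of_subset_of_ae_sdiff_eq_zero nullMeasurableSet_Ioc
    (Ioc_subset_Ioc_left hax) ?_
  filter_upwards [(ae_restrict_iff' measurableSet_Ioc).1 hg] with τ hτ hmem
  rw [hτ ⟨hmem.1.1, not_lt.1 fun h => hmem.2 ⟨h, hmem.1.2⟩⟩, mul_zero]

theorem tendsto_rlInt_nhdsGT (hα : 0 ≤ α) (hg : Tendsto g (𝓝[>] a) (𝓝 0)) :
    Tendsto (rlInt a α g) (𝓝[>] a) (𝓝 0) := by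
  obtain rfl | hα := hα.eq_or_lt
  · rwa [rlInt_zero]
  obtain ⟨d, had, hd⟩ := mem_nhdsGT_iff_exists_Ioc_subset.1
    (hg.eventually (Metric.closedBall_mem_nhds 0 one_pos))
  have hbound : ∀ᶠ t in 𝓝[>] a, ‖rlInt a α g t‖ ≤ 1 * ((t - a) ^ α / Real.Gamma (α + 1)) := by
    filter_upwards [Ioc_mem_nhdsGT had] with t ht
    refine abs_rlInt_le hα ht.1.le (ae_restrict_of_forall_mem measurableSet_Ioc fun τ hτ => ?_)
    exact mem_closedBall_zero_iff.1 (hd ⟨hτ.1, hτ.2.trans ht.2⟩)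
  have hpow : Continuous fun t => 1 * ((t - a) ^ α / Real.Gamma (α + 1)) :=
    continuous_const.mul (((continuous_sub_right a).rpow_const fun _ => Or.inr hα.le).div_const _)
  refine squeeze_zero_norm' hbound ((hpow.tendsto' a 0 ?_).mono_left nhdsWithin_le_nhds)
  rw [sub_self, Real.zero_rpow hα.ne', zero_div, mul_zero]

theorem eq_zero_of_rlInt_ae_eq_add_integral {c : ℝ} (hα : 0 ≤ α) (hab : a < b)
    (hf : Tendsto f (𝓝[>] a) (𝓝 0)) (hg : IntervalIntegrable g volume a b)
    (h : ∀ᵐ t ∂volume.restrict (Ioc a b), rlInt a α f t = c + ∫ τ in a..t, g τ) : c = 0 := by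
  have hcont : ContinuousOn (fun t => c + ∫ τ in a..t, g τ) (Icc a b) := by
    rw [intervalIntegrable_iff_integrableOn_Icc_of_le hab.le] at hg
    exact continuousOn_const.add (intervalIntegral.continuousOn_primitive_interval
      (by rwa [uIcc_of_le hab.le]) |>.mono (by rw [uIcc_of_le hab.le]))
  have hlim : Tendsto (fun t => c + ∫ τ in a..t, g τ) (𝓝[>] a) (𝓝 c) := by
    have h := (hcont a (left_mem_Icc.2 hab.le)).mono_of_mem_nhdsWithin (Icc_mem_nhdsGT hab)
    simpa only [ContinuousWithinAt, intervalIntegral.integral_same, add_zero] using h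
  exact tendsto_nhds_unique_of_frequently_eq hlim (tendsto_rlInt_nhdsGT hα hf)
    ((frequently_nhdsGT_of_ae hab h).mono fun _ => Eq.symm)

theorem ae_eq_rlInt_of_rlInt_ae_eq_add_integral {c : ℝ} (hα : 0 < α) (hα1 : α ≤ 1)
    (hab : a < b) (hf : IntervalIntegrable f volume a b) (hf0 : Tendsto f (𝓝[>] a) (𝓝 0))
    (hg : IntervalIntegrable g volume a b)
    (h : ∀ᵐ t ∂volume.restrict (Ioc a b), rlInt a (1 - α) f t = c + ∫ τ in a..t, g τ) :
    f =ᵐ[volume.restrict (Ioc a b)] rlInt a α g := by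
  have hc : c = 0 := eq_zero_of_rlInt_ae_eq_add_integral (sub_nonneg.2 hα1) hab hf0 hg h
  refine ae_eq_of_forall_intervalIntegral_eq hab.le hf
    (intervalIntegrable_rlInt hα.le hab.le hg) fun t ht => ?_
  have hsub : uIcc a t ⊆ uIcc a b := by
    rw [uIcc_of_le ht.1, uIcc_of_le hab.le]; exact Icc_subset_Icc_right ht.2
  have hft := hf.mono_set hsub
  have hgt := hg.mono_set hsub
  have hrl : rlInt a (1 - α) f =ᵐ[volume.restrict (Ioc a t)] rlInt a 1 g := by
    filter_upwards [ae_restrict_of_ae_restrict_of_subset (Ioc_subset_Ioc_right ht.2) h] with τ hτ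
    rw [hτ, hc, zero_add, rlInt_one]
  calc ∫ τ in a..t, f τ = rlInt a (α + (1 - α)) f t := by rw [add_sub_cancel, rlInt_one]
    _ = rlInt a α (rlInt a (1 - α) f) t :=
      (rlInt_rlInt hα.le (sub_nonneg.2 hα1) (by linarith) ht.1 hft).symm
    _ = rlInt a α (rlInt a 1 g) t := rlInt_congr_ae hα.ne' ht.1 hrl
    _ = rlInt a (α + 1) g t := rlInt_rlInt hα.le zero_le_one (by linarith) ht.1 hgt
    _ = rlInt a 1 (rlInt a α g) t := by
      rw [add_comm, rlInt_rlInt zero_le_one hα.le (by linarith) ht.1 hgt]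
    _ = ∫ τ in a..t, rlInt a α g τ := rlInt_one ..

end RiemannLiouville

theorem ae_lipschitzOnWith {X Y Z : Type*} [PseudoMetricSpace X] [PseudoMetricSpace Y]
    [MeasurableSpace Z] {μ : Measure Z} {F : X → Z → Y} {s : Set X} {K : ℝ≥0}
    (hs : IsSeparable s) (hF : ∀ᵐ z ∂μ, ContinuousOn (F · z) s)
    (h : ∀ x ∈ s, ∀ y ∈ s, ∀ᵐ z ∂μ, dist (F x z) (F y z) ≤ K * dist x y) :
    ∀ᵐ z ∂μ, LipschitzOnWith K (F · z) s := by
  have := hs.separableSpace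
  obtain ⟨c, hc, hdense⟩ := exists_countable_dense s
  have hctbl : ∀ᵐ z ∂μ, ∀ x ∈ c, ∀ y ∈ c, dist (F x z) (F y z) ≤ K * dist x y :=
    (ae_ball_iff hc).2 fun x _ => (ae_ball_iff hc).2 fun y _ => h x x.2 y y.2
  filter_upwards [hctbl, hF] with z hz hcont
  rw [lipschitzOnWith_iff_restrict, ← lipschitzOnWith_univ, ← hdense.closure_eq]
  exact (LipschitzOnWith.of_dist_le_mul hz).closure hcont.domRestrict.continuousOn

theorem norm_le_sum_norm_apply {ι : Type*} [Fintype ι] {β : ι → Type*}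
    [∀ i, SeminormedAddCommGroup (β i)] (x : PiLp 2 β) : ‖x‖ ≤ ∑ i, ‖x i‖ := by
  rw [PiLp.norm_eq_of_L2]
  exact Real.sqrt_le_iff.2 ⟨by positivity,
    Finset.sum_sq_le_sq_sum_of_nonneg fun i _ => norm_nonneg _⟩

namespace IsCaputoLocalSol

variable {a b d x : ℝ} {If I I' : Set ℝ} {m : ℕ} {Ω : Set (EuclideanSpace ℝ (Fin m))}
  {α : Fin m → ℝ} {qa : EuclideanSpace ℝ (Fin m)}
  {F : EuclideanSpace ℝ (Fin m) → ℝ → EuclideanSpace ℝ (Fin m)}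
  {q q' : ℝ → EuclideanSpace ℝ (Fin m)}

theorem Icc_subset (hq : IsCaputoLocalSol a If Ω α qa F q I) (hb : b ∈ I) : Icc a b ⊆ I :=
  hq.1.2.2.2.out hq.1.1 hb

theorem continuousOn_Icc (hq : IsCaputoLocalSol a If Ω α qa F q I) (hb : b ∈ I) :
    ContinuousOn q (Icc a b) :=
  hq.2.2.1.mono (hq.Icc_subset hb)

theorem apply_left (hq : IsCaputoLocalSol a If Ω α qa F q I) : q a = qa := hq.2.2.2.2.1

theorem continuousOn_Icc_apply (hq : IsCaputoLocalSol a If Ω α qa F q I) (hb : b ∈ I)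
    (i : Fin m) : ContinuousOn (fun t => q t i) (Icc a b) :=
  (EuclideanSpace.proj (𝕜 := ℝ) i).continuous.comp_continuousOn (hq.continuousOn_Icc hb)

theorem exists_rlInt_ae_eq (hq : IsCaputoLocalSol a If Ω α qa F q I) (hb : b ∈ I) (hab : a ≤ b)
    (i : Fin m) : IntervalIntegrable (fun s => F (q s) s i) volume a b ∧
      ∃ c, ∀ᵐ t ∂volume.restrict (Ioc a b),
        rlInt a (1 - α i) (fun s => q s i - qa i) t = c + ∫ s in a..t, F (q s) s i := by
  obtain ⟨c, h, hint, hrl, hF⟩ := hq.2.2.2.2.2 i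
  have hsub : Ioc a b ⊆ I := Ioc_subset_Icc_self.trans (hq.Icc_subset hb)
  have hF' : h =ᵐ[volume.restrict (Ioc a b)] fun s => F (q s) s i :=
    ae_restrict_of_ae_restrict_of_subset hsub hF
  refine ⟨?_, c, ?_⟩
  · rw [intervalIntegrable_iff_integrableOn_Ioc_of_le hab]
    exact ((hint b hb).mono_set Ioc_subset_Icc_self).congr_fun_ae hF'
  · filter_upwards [ae_restrict_of_ae_restrict_of_subset hsub hrl,
      ae_restrict_mem measurableSet_Ioc] with t ht htab
    rw [ht, intervalIntegral.integral_of_le htab.1.le, intervalIntegral.integral_of_le htab.1.le,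
      integral_congr_ae (ae_restrict_of_ae_restrict_of_subset (Ioc_subset_Ioc_right htab.2) hF')]

theorem sub_ae_eq_rlInt (hq : IsCaputoLocalSol a If Ω α qa F q I)
    (hq' : IsCaputoLocalSol a If Ω α qa F q' I') (hb : b ∈ I) (hb' : b ∈ I') (hab : a < b)
    {i : Fin m} (hα : 0 < α i) (hα1 : α i ≤ 1) :
    (fun t => q' t i - q t i) =ᵐ[volume.restrict (Ioc a b)]
      rlInt a (α i) (fun s => F (q' s) s i - F (q s) s i) := by
  obtain ⟨hint, c, hrl⟩ := hq.exists_rlInt_ae_eq hb hab.le i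
  obtain ⟨hint', c', hrl'⟩ := hq'.exists_rlInt_ae_eq hb' hab.le i
  have hqi := hq.continuousOn_Icc_apply hb i
  have hqi' := hq'.continuousOn_Icc_apply hb' i
  have hlim : Tendsto (fun t => q' t i - q t i) (𝓝[>] a) (𝓝 0) := by
    have h : Tendsto (fun t => q' t i - q t i) (𝓝[>] a) (𝓝 (q' a i - q a i)) :=
      ((hqi'.sub hqi) a (left_mem_Icc.2 hab.le)).mono_of_mem_nhdsWithin (Icc_mem_nhdsGT hab)
    rwa [hq.apply_left, hq'.apply_left, sub_self] at h
  refine ae_eq_rlInt_of_rlInt_ae_eq_add_integral hα hα1 hab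
    (ContinuousOn.intervalIntegrable_of_Icc hab.le (hqi'.sub hqi)) hlim (hint'.sub hint)
    (c := c' - c) ?_
  filter_upwards [hrl, hrl', ae_restrict_mem measurableSet_Ioc] with t ht ht' htab
  have hsub : Icc a t ⊆ Icc a b := Icc_subset_Icc_right htab.2
  have hqa : ContinuousOn (fun s => q s i - qa i) (Icc a t) :=
    (hqi.mono hsub).sub continuousOn_const
  have hqa' : ContinuousOn (fun s => q' s i - qa i) (Icc a t) :=
    (hqi'.mono hsub).sub continuousOn_const
  have huIcc : uIcc a t ⊆ uIcc a b := by rwa [uIcc_of_le htab.1.le, uIcc_of_le hab.le]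
  rw [intervalIntegral.integral_sub (hint'.mono_set huIcc) (hint.mono_set huIcc),
    ← add_sub_add_comm, ← ht, ← ht', ← rlInt_sub (sub_nonneg.2 hα1) htab.1.le hqa' hqa]
  simp only [sub_sub_sub_cancel_right]

theorem abs_sub_apply_le {C : ℝ} (hq : IsCaputoLocalSol a If Ω α qa F q I)
    (hq' : IsCaputoLocalSol a If Ω α qa F q' I') (hd : d ∈ I) (hd' : d ∈ I') (hax : a ≤ x)
    (hxd : x < d) {i : Fin m} (hα : 0 < α i) (hα1 : α i ≤ 1) (heq : EqOn q' q (Icc a x))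
    (hC : 0 ≤ C) (hF : ∀ᵐ τ ∂volume.restrict (Ioc x d), ‖F (q' τ) τ - F (q τ) τ‖ ≤ C) :
    ∀ t ∈ Icc x d, |q' t i - q t i| ≤ C * ((d - x) ^ α i / Real.Gamma (α i + 1)) := by
  have hsub : Icc x d ⊆ Icc a d := Icc_subset_Icc_left hax
  refine le_of_ae_le_of_continuousOn_Icc hxd
    (((hq'.continuousOn_Icc_apply hd' i).sub (hq.continuousOn_Icc_apply hd i)).mono hsub).abs
    continuousOn_const ?_
  filter_upwards [ae_restrict_of_ae_restrict_of_subset (Ioc_subset_Ioc_left hax)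
    (hq.sub_ae_eq_rlInt hq' hd hd' (hax.trans_lt hxd) hα hα1),
    ae_restrict_mem measurableSet_Ioc] with t ht htxd
  have hzero : ∀ᵐ τ ∂volume.restrict (Ioc a x), F (q' τ) τ i - F (q τ) τ i = 0 :=
    ae_restrict_of_forall_mem measurableSet_Ioc fun τ hτ => by
      rw [heq (Ioc_subset_Icc_self hτ), sub_self]
  have hbound : ∀ᵐ τ ∂volume.restrict (Ioc x t), |F (q' τ) τ i - F (q τ) τ i| ≤ C :=
    (ae_restrict_of_ae_restrict_of_subset (Ioc_subset_Ioc_right htxd.2) hF).mono fun τ hτ =>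
      (PiLp.norm_apply_le (F (q' τ) τ - F (q τ) τ) i).trans hτ
  have := Real.Gamma_pos_of_pos (by positivity : 0 < α i + 1)
  rw [ht, rlInt_eq_rlInt_of_ae_eq_zero hα.ne' hax htxd.1.le hzero]
  refine (abs_rlInt_le hα htxd.1.le hbound).trans ?_
  gcongr
  exacts [sub_nonneg.2 htxd.1.le, htxd.2]

theorem eqOn_Icc_of_lipschitzOnWith {U : Set (EuclideanSpace ℝ (Fin m))} {L : ℝ≥0}
    (hq : IsCaputoLocalSol a If Ω α qa F q I) (hq' : IsCaputoLocalSol a If Ω α qa F q' I')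
    (hα : ∀ i, 0 < α i ∧ α i ≤ 1) (hd : d ∈ I) (hd' : d ∈ I') (hax : a ≤ x) (hxd : x < d)
    (heq : EqOn q' q (Icc a x)) (hU : MapsTo q (Icc x d) U) (hU' : MapsTo q' (Icc x d) U)
    (hF : ∀ᵐ τ ∂volume.restrict (Ioc x d), LipschitzOnWith L (F · τ) U)
    (hL : L * ∑ i, (d - x) ^ α i / Real.Gamma (α i + 1) < 1) : EqOn q' q (Icc x d) := by
  have hcont : ContinuousOn (fun t => ‖q' t - q t‖) (Icc x d) :=
    ((hq'.continuousOn_Icc hd').sub (hq.continuousOn_Icc hd)).norm.mono (Icc_subset_Icc_left hax)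
  obtain ⟨y, hy, hmax⟩ := isCompact_Icc.exists_isMaxOn (nonempty_Icc.2 hxd.le) hcont
  have hbound : ∀ᵐ τ ∂volume.restrict (Ioc x d),
      ‖F (q' τ) τ - F (q τ) τ‖ ≤ L * ‖q' y - q y‖ := by
    filter_upwards [hF, ae_restrict_mem measurableSet_Ioc] with τ hτ hτxd
    have hτ' := Ioc_subset_Icc_self hτxd
    exact (hτ.norm_sub_le (hU' hτ') (hU hτ')).trans
      (mul_le_mul_of_nonneg_left (hmax hτ') L.2)
  have hcontract : ‖q' y - q y‖ ≤
      (L * ∑ i, (d - x) ^ α i / Real.Gamma (α i + 1)) * ‖q' y - q y‖ :=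
    calc ‖q' y - q y‖ ≤ ∑ i, |q' y i - q y i| := norm_le_sum_norm_apply (q' y - q y)
      _ ≤ ∑ i, L * ‖q' y - q y‖ * ((d - x) ^ α i / Real.Gamma (α i + 1)) :=
        Finset.sum_le_sum fun i _ => hq.abs_sub_apply_le hq' hd hd' hax hxd (hα i).1 (hα i).2 heq
          (by positivity) hbound y hy
      _ = _ := by rw [← Finset.mul_sum, mul_right_comm]
  have hzero : ‖q' y - q y‖ ≤ 0 := by nlinarith
  exact fun t ht => sub_eq_zero.1 (norm_le_zero_iff.1 ((hmax ht).trans hzero))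

theorem eventually_nhdsGT_eq {U : Set (EuclideanSpace ℝ (Fin m))} {L : ℝ≥0}
    (hq : IsCaputoLocalSol a If Ω α qa F q I) (hq' : IsCaputoLocalSol a If Ω α qa F q' I')
    (hα : ∀ i, 0 < α i ∧ α i ≤ 1) (hb : b ∈ I) (hb' : b ∈ I') (hax : a ≤ x) (hxb : x < b)
    (heq : EqOn q' q (Icc a x)) (hU : U ∈ 𝓝 (q x))
    (hF : ∀ᵐ τ ∂volume.restrict (Ioc x b), LipschitzOnWith L (F · τ) U) :
    ∀ᶠ t in 𝓝[>] x, q' t = q t := by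
  have hx : x ∈ Icc a b := ⟨hax, hxb.le⟩
  have hnhds : Icc a b ∈ 𝓝[≥] x := mem_of_superset (Icc_mem_nhdsGE hxb) (Icc_subset_Icc_left hax)
  have hqU : ∀ᶠ t in 𝓝[≥] x, q t ∈ U :=
    ((hq.continuousOn_Icc hb x hx).mono_of_mem_nhdsWithin hnhds).eventually_mem hU
  have hqU' : ∀ᶠ t in 𝓝[≥] x, q' t ∈ U :=
    ((hq'.continuousOn_Icc hb' x hx).mono_of_mem_nhdsWithin hnhds).eventually_mem
      (heq (right_mem_Icc.2 hax) ▸ hU)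
  obtain ⟨u, hxu, hu⟩ := mem_nhdsGE_iff_exists_Icc_subset.1 (hqU.and hqU')
  have hsmall : ∀ᶠ d in 𝓝[>] x, L * ∑ i, (d - x) ^ α i / Real.Gamma (α i + 1) < 1 := by
    have hcont : Continuous fun d => L * ∑ i, (d - x) ^ α i / Real.Gamma (α i + 1) :=
      continuous_const.mul <| continuous_finsetSum _ fun i _ =>
        ((continuous_sub_right x).rpow_const fun _ => Or.inr (hα i).1.le).div_const _
    refine nhdsWithin_le_nhds (hcont.continuousAt.eventually_lt_const ?_)
    simp only [sub_self, Real.zero_rpow (hα _).1.ne', zero_div, Finset.sum_const_zero, mul_zero,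
      zero_lt_one]
  obtain ⟨d, hdL, hxd, hd⟩ := (hsmall.and (Ioc_mem_nhdsGT (lt_min hxu hxb))).exists
  have hdu : Icc x d ⊆ Icc x u := Icc_subset_Icc_right (hd.trans (min_le_left _ _))
  have hdb : d ≤ b := hd.trans (min_le_right _ _)
  have hdab : d ∈ Icc a b := ⟨hax.trans hxd.le, hdb⟩
  have heqd : EqOn q' q (Icc x d) := hq.eqOn_Icc_of_lipschitzOnWith hq' hα (hq.Icc_subset hb hdab)
    (hq'.Icc_subset hb' hdab) hax hxd heq (fun t ht => (hu (hdu ht)).1)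
    (fun t ht => (hu (hdu ht)).2)
    (ae_restrict_of_ae_restrict_of_subset (Ioc_subset_Ioc_right hdb) hF) hdL
  filter_upwards [Icc_mem_nhdsGT hxd] with t ht using heqd ht

end IsCaputoLocalSol

theorem statement17_general (a : ℝ) (If : Set ℝ) (m : ℕ) (Ω : Set (EuclideanSpace ℝ (Fin m)))
    (α : Fin m → ℝ) (hα : ∀ i, 0 < α i ∧ α i ≤ 1) (qa : EuclideanSpace ℝ (Fin m))
    (F : EuclideanSpace ℝ (Fin m) → ℝ → EuclideanSpace ℝ (Fin m))
    (hFcont : ∀ᵐ t ∂volume.restrict If, ContinuousOn (F · t) Ω)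
    (hlip : ∀ x ∈ Ω, ∀ t ∈ If, ∃ R > (0 : ℝ), ∃ δ > (0 : ℝ), ∃ L : ℝ, 0 ≤ L ∧
      Metric.closedBall x R ⊆ Ω ∧
      ∀ x₁ ∈ Metric.closedBall x R, ∀ x₂ ∈ Metric.closedBall x R,
        ∀ᵐ τ ∂volume.restrict (Icc (t - δ) (t + δ) ∩ If), ‖F x₂ τ - F x₁ τ‖ ≤ L * ‖x₂ - x₁‖)
    (q : ℝ → EuclideanSpace ℝ (Fin m)) (I : Set ℝ) (q' : ℝ → EuclideanSpace ℝ (Fin m))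
    (I' : Set ℝ) (hq : IsCaputoLocalSol a If Ω α qa F q I)
    (hq' : IsCaputoLocalSol a If Ω α qa F q' I') : EqOn q' q (I ∩ I') := by
  rintro b ⟨hb, hb'⟩
  have hab : a ≤ b := hq.1.2.1 hb
  have hclosed : IsClosed ({t | q' t = q t} ∩ Icc a b) := by
    rw [inter_comm]
    exact isClosed_Icc.isClosed_eq (hq'.continuousOn_Icc hb') (hq.continuousOn_Icc hb)
  refine hclosed.Icc_subset_of_forall_mem_nhdsGT_of_Icc_subset
    (hq'.apply_left.trans hq.apply_left.symm) (fun x hx heq => ?_) (right_mem_Icc.2 hab)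
  have hxI : x ∈ I := hq.Icc_subset hb (Ico_subset_Icc_self hx)
  obtain ⟨R, hR, δ, hδ, L, hL, hRΩ, hLip⟩ := hlip (q x) (hq.2.2.2.1 x hxI) x (hq.2.1 hxI)
  lift L to ℝ≥0 using hL
  have hLip' := ae_lipschitzOnWith (.of_separableSpace _)
    (ae_restrict_of_ae_restrict_of_subset inter_subset_right (hFcont.mono fun _ h => h.mono hRΩ))
    fun x₁ hx₁ x₂ hx₂ => by simpa only [dist_eq_norm] using hLip x₂ hx₂ x₁ hx₁
  have hc : min b (x + δ) ∈ Icc a b :=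
    ⟨le_min hab (by linarith [hx.1]), min_le_left _ _⟩
  have hsub : Ioc x (min b (x + δ)) ⊆ Icc (x - δ) (x + δ) ∩ If := fun t ht =>
    ⟨⟨by linarith [ht.1], ht.2.trans (min_le_right _ _)⟩, hq.2.1 (hq.Icc_subset hb
      ⟨hx.1.trans ht.1.le, ht.2.trans (min_le_left _ _)⟩)⟩
  exact hq.eventually_nhdsGT_eq hq' hα (hq.Icc_subset hb hc) (hq'.Icc_subset hb' hc) hx.1
    (lt_min hx.2 (by linarith)) heq (Metric.closedBall_mem_nhds _ hR)
    (ae_restrict_of_ae_restrict_of_subset hsub hLip')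

theorem statement17 (a : ℝ) (If : Set ℝ)
    (haI : a ∈ If) (hIsub : If ⊆ Set.Ici a) (hIint : (interior If).Nonempty)
    (hIord : If.OrdConnected)
    (m : ℕ) (hm : 0 < m) (Ω : Set (EuclideanSpace ℝ (Fin m)))
    (hΩopen : IsOpen Ω) (hΩne : Ω.Nonempty)
    (α : Fin m → ℝ) (hα : ∀ i, 0 < α i ∧ α i ≤ 1)
    (qa : EuclideanSpace ℝ (Fin m)) (hqa : qa ∈ Ω)
    (F : EuclideanSpace ℝ (Fin m) → ℝ → EuclideanSpace ℝ (Fin m))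
    -- Carathéodory assumptions
    (hFmeas : ∀ x ∈ Ω, MeasureTheory.AEStronglyMeasurable (fun t => F x t)
      (MeasureTheory.volume.restrict If))
    (hFcont : ∀ᵐ t ∂(MeasureTheory.volume.restrict If), ContinuousOn (fun x => F x t) Ω)
    -- `F` is bounded on compacts
    (hbdd : ∀ K : Set (EuclideanSpace ℝ (Fin m)), K ⊆ Ω → IsCompact K →
      ∀ c ∈ If, ∀ d ∈ If, c ≤ d → ∃ M : ℝ, 0 ≤ M ∧ ∀ x ∈ K,
        ∀ᵐ t ∂(MeasureTheory.volume.restrict (Set.Icc c d)), ‖F x t‖ ≤ M)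
    -- `F` is locally Lipschitz continuous in its first variable
    (hlip : ∀ x ∈ Ω, ∀ t ∈ If, ∃ R > (0:ℝ), ∃ δ > (0:ℝ), ∃ L : ℝ, 0 ≤ L ∧
      Metric.closedBall x R ⊆ Ω ∧
      ∀ x₁ ∈ Metric.closedBall x R, ∀ x₂ ∈ Metric.closedBall x R,
        ∀ᵐ τ ∂(MeasureTheory.volume.restrict (Set.Icc (t - δ) (t + δ) ∩ If)),
          ‖F x₂ τ - F x₁ τ‖ ≤ L * ‖x₂ - x₁‖) :
    ∀ (q : ℝ → EuclideanSpace ℝ (Fin m)) (I : Set ℝ)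
      (q' : ℝ → EuclideanSpace ℝ (Fin m)) (I' : Set ℝ),
      IsCaputoLocalSol a If Ω α qa F q I → IsCaputoLocalSol a If Ω α qa F q' I' →
      I ⊆ I' → ∀ t ∈ I, q' t = q t := by
  intro q I q' I' hq hq' hII' t ht
  exact statement17_general a If m Ω α hα qa F hFcont hlip q I q' I' hq hq' ⟨ht, hII' ht⟩
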